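/- Let p be a prime, A a δ-ring, and α, β ∈ A with δ(α) = α·β. Then there exists a unique δ-structure on E^α(A) = A[T]/(T²−αT) such that the canonical map ι : A → E^α(A) is a δ-homomorphism and δ(T) = β·T; this δ-structure is given explicitly by δ(x₀ + x₁T) = δ(x₀) + ((α^{p−1} + p·β)·δ(x₁) + β·x₁^p − ∑_{ν=1}^{p−1} (1/p)·C(p,ν)·x₀^{p−ν}·α^{ν−1}·x₁^ν)·T for x₀, x₁ ∈ A. -/

import Mathlib

/-- A δ-structure on a commutative ring `A`, relative to a prime `p`. -/
structure DeltaStructure (p : ℕ) (A : Type*) [CommRing A] where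
  δ : A → A
  delta_zero : δ 0 = 0
  delta_one : δ 1 = 0
  delta_add : ∀ x y : A, δ (x + y) =
    δ x + δ y - ∑ i ∈ Finset.Ioo 0 p, ((p.choose i / p : ℕ) : A) * x ^ i * y ^ (p - i)
  delta_mul : ∀ x y : A, δ (x * y) =
    δ x * y ^ p + x ^ p * δ y + (p : A) * δ x * δ y

/-- The ideal `(T² − α·T)` of `A[T]`. -/
noncomputable def twIdeal {A : Type*} [CommRing A] (α : A) : Ideal (Polynomial A) :=
  Ideal.span {Polynomial.X ^ 2 - Polynomial.C α * Polynomial.X}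

/-- The twisted extension `E^α(A) = A[T]/(T² − α·T)`. -/
abbrev TwExt {A : Type*} [CommRing A] (α : A) : Type _ :=
  Polynomial A ⧸ twIdeal α

open Polynomial

/-!
A δ-structure on `R` is the same thing as a ring-homomorphic section of the projection
`W₂(R) → R` from Witt vectors of length two, `δ` being the second coordinate. Writing
`E = E^α(A)`, the homomorphism `A → W₂(E)`, `a ↦ (a, δ a)`, extends to `A[T]` by `T ↦ (T, βT)`.
Since `δ α = αβ` maps `α` to `(α, αβ)`, and `(T, βT)² = (α, αβ)(T, βT)` whenever `T² = αT`, this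
extension factors through `E` and gives the δ-structure. Uniqueness holds because `A` and `T`
generate `E`, and the formula comes from expanding `δ(x₁T + x₀)` with `Tⁿ⁺¹ = αⁿT`.
-/

theorem pow_succ_eq_of_sq_eq_mul {M : Type*} [Monoid M] {a t : M} (ht : t ^ 2 = a * t) (n : ℕ) :
    t ^ (n + 1) = a ^ n * t := by
  induction n with
  | zero => simp
  | succ n ih => rw [pow_succ, ih, mul_assoc, ← sq, ht, ← mul_assoc, ← pow_succ]

section Carry

variable {p : ℕ} {R S : Type*} [CommSemiring R] [CommSemiring S]

/-- The value at `(x, y)` of the integral polynomial `((X + Y) ^ p - X ^ p - Y ^ p) / p`, which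
measures the failure of additivity of a δ-structure and is the carry in the addition of Witt
vectors of length two. -/
def wittCarry (p : ℕ) (x y : R) : R :=
  ∑ i ∈ Finset.Ioo 0 p, ((p.choose i / p : ℕ) : R) * x ^ i * y ^ (p - i)

theorem map_wittCarry (f : R →+* S) (x y : R) :
    f (wittCarry p x y) = wittCarry p (f x) (f y) := by
  simp only [wittCarry, map_sum, map_mul, map_pow, map_natCast]

theorem add_pow_eq_add_mul_wittCarry (hp : p.Prime) (x y : R) :
    (x + y) ^ p = x ^ p + y ^ p + p * wittCarry p x y := by
  rw [add_pow_prime_eq' hp, wittCarry]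
  exact congrArg (x ^ p + y ^ p + p * ·) (Finset.sum_congr rfl fun i _ => by ring)

theorem wittCarry_mul_left_of_sq_eq_mul {a t : R} (ht : t ^ 2 = a * t) (x y : R) :
    wittCarry p (x * t) y = (∑ i ∈ Finset.Ioo 0 p,
      ((p.choose i / p : ℕ) : R) * y ^ (p - i) * a ^ (i - 1) * x ^ i) * t := by
  rw [wittCarry, Finset.sum_mul]
  refine Finset.sum_congr rfl fun i hi => ?_
  obtain ⟨k, rfl⟩ := Nat.exists_eq_add_one.2 (Finset.mem_Ioo.1 hi).1
  rw [mul_pow, pow_succ_eq_of_sq_eq_mul ht, Nat.add_sub_cancel]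
  ring

end Carry

section WittVectorsOfLengthTwo

variable {p : ℕ} {R : Type*}

/-- The type `W₂(R)` of `p`-typical Witt vectors of length two over `R`. -/
abbrev WittTwo (p : ℕ) (R : Type*) : Type _ :=
  TruncatedWittVector p 2 R

theorem WittTwo.ext {x y : WittTwo p R} (h₀ : x.coeff 0 = y.coeff 0)
    (h₁ : x.coeff 1 = y.coeff 1) : x = y :=
  TruncatedWittVector.ext (Fin.forall_fin_two.2 ⟨h₀, h₁⟩)

variable [hp : Fact p.Prime] [CommRing R]

theorem wittVector_ghostComponent_one (x : WittVector p R) :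
    WittVector.ghostComponent 1 x = x.coeff 0 ^ p + p * x.coeff 1 := by
  rw [WittVector.ghostComponent_apply, wittPolynomial_one]
  simp [add_comm]

theorem wittVector_add_coeff_one (x y : WittVector p R) :
    (x + y).coeff 1 = x.coeff 1 + y.coeff 1 - wittCarry p (x.coeff 0) (y.coeff 0) := by
  -- Lift to the torsion-free ring `MvPolynomial R ℤ`, over which the first ghost component together
  -- with the coefficient `0` determines the coefficient `1`.
  obtain ⟨x, rfl⟩ := WittVector.map_surjective _ (MvPolynomial.counit_surjective R) x
  obtain ⟨y, rfl⟩ := WittVector.map_surjective _ (MvPolynomial.counit_surjective R) y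
  simp only [← map_add, WittVector.map_coeff, ← map_wittCarry, ← map_sub]
  congr 1
  have hghost := map_add (WittVector.ghostComponent 1) x y
  simp only [wittVector_ghostComponent_one, WittVector.add_coeff_zero] at hghost
  apply mul_left_cancel₀ (Nat.cast_ne_zero.2 hp.out.ne_zero : (p : MvPolynomial R ℤ) ≠ 0)
  linear_combination hghost - add_pow_eq_add_mul_wittCarry hp.out (x.coeff 0) (y.coeff 0)

theorem wittVector_mul_coeff_one (x y : WittVector p R) :
    (x * y).coeff 1 =
      x.coeff 1 * y.coeff 0 ^ p + x.coeff 0 ^ p * y.coeff 1 + p * x.coeff 1 * y.coeff 1 := by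
  obtain ⟨x, rfl⟩ := WittVector.map_surjective _ (MvPolynomial.counit_surjective R) x
  obtain ⟨y, rfl⟩ := WittVector.map_surjective _ (MvPolynomial.counit_surjective R) y
  simp only [← map_mul, WittVector.map_coeff, ← map_pow, ← map_add,
    ← map_natCast (MvPolynomial.counit R) p]
  congr 1
  have hghost := map_mul (WittVector.ghostComponent 1) x y
  simp only [wittVector_ghostComponent_one, WittVector.mul_coeff_zero] at hghost
  apply mul_left_cancel₀ (Nat.cast_ne_zero.2 hp.out.ne_zero : (p : MvPolynomial R ℤ) ≠ 0)
  linear_combination hghost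

namespace WittTwo

theorem coeff_zero_one : (1 : WittTwo p R).coeff 0 = 1 :=
  WittVector.one_coeff_zero p R

theorem coeff_one_one : (1 : WittTwo p R).coeff 1 = 0 :=
  WittVector.one_coeff_eq_of_pos p R 1 one_pos

theorem coeff_zero_add (x y : WittTwo p R) : (x + y).coeff 0 = x.coeff 0 + y.coeff 0 := by
  obtain ⟨x, rfl⟩ := WittVector.truncate_surjective p 2 R x
  obtain ⟨y, rfl⟩ := WittVector.truncate_surjective p 2 R y
  simpa only [← map_add, WittVector.coeff_truncate, Fin.val_zero] using
    WittVector.add_coeff_zero x y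

theorem coeff_one_add (x y : WittTwo p R) :
    (x + y).coeff 1 = x.coeff 1 + y.coeff 1 - wittCarry p (x.coeff 0) (y.coeff 0) := by
  obtain ⟨x, rfl⟩ := WittVector.truncate_surjective p 2 R x
  obtain ⟨y, rfl⟩ := WittVector.truncate_surjective p 2 R y
  simpa only [← map_add, WittVector.coeff_truncate, Fin.val_zero, Fin.val_one] using
    wittVector_add_coeff_one x y

theorem coeff_zero_mul (x y : WittTwo p R) : (x * y).coeff 0 = x.coeff 0 * y.coeff 0 := by
  obtain ⟨x, rfl⟩ := WittVector.truncate_surjective p 2 R x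
  obtain ⟨y, rfl⟩ := WittVector.truncate_surjective p 2 R y
  simpa only [← map_mul, WittVector.coeff_truncate, Fin.val_zero] using
    WittVector.mul_coeff_zero x y

theorem coeff_one_mul (x y : WittTwo p R) :
    (x * y).coeff 1 =
      x.coeff 1 * y.coeff 0 ^ p + x.coeff 0 ^ p * y.coeff 1 + p * x.coeff 1 * y.coeff 1 := by
  obtain ⟨x, rfl⟩ := WittVector.truncate_surjective p 2 R x
  obtain ⟨y, rfl⟩ := WittVector.truncate_surjective p 2 R y
  simpa only [← map_mul, WittVector.coeff_truncate, Fin.val_zero, Fin.val_one] using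
    wittVector_mul_coeff_one x y

variable (p R) in
/-- The projection `W₂(R) → R` onto the coefficient `0`; its ring-homomorphic sections are
the δ-structures on `R`. -/
def projection : WittTwo p R →+* R where
  toFun x := x.coeff 0
  map_zero' := TruncatedWittVector.coeff_zero p 2 R 0
  map_one' := coeff_zero_one
  map_add' := coeff_zero_add
  map_mul' := coeff_zero_mul

theorem mk_sq_eq_mul_of_sq_eq_mul {a t : R} (ht : t ^ 2 = a * t) (b : R) :
    (TruncatedWittVector.mk p ![t, b * t] : WittTwo p R) ^ 2 =
      TruncatedWittVector.mk p ![a, a * b] * TruncatedWittVector.mk p ![t, b * t] := by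
  rw [sq]
  apply WittTwo.ext
  · simpa [coeff_zero_mul, sq] using ht
  · obtain ⟨n, rfl⟩ := Nat.exists_eq_add_one.2 hp.out.pos
    simp only [coeff_one_mul, TruncatedWittVector.coeff_mk, Matrix.cons_val_zero,
      Matrix.cons_val_one, pow_succ_eq_of_sq_eq_mul ht]
    linear_combination (2 * b * a ^ n + ((n + 1 : ℕ) : R) * b ^ 2) * ht

end WittTwo

end WittVectorsOfLengthTwo

namespace DeltaStructure

variable {p : ℕ} {R S : Type*} [CommRing R] [CommRing S]

theorem δ_injective : Function.Injective (δ : DeltaStructure p R → R → R) := by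
  rintro ⟨⟩ ⟨⟩ rfl
  rfl

theorem δ_map_add_map_mul_of_sq_eq_mul (hp : p ≠ 0) (D : DeltaStructure p R)
    (E : DeltaStructure p S) (f : R →+* S) (hf : ∀ a, E.δ (f a) = f (D.δ a)) {a b : R} {t : S}
    (ht : t ^ 2 = f a * t) (hδt : E.δ t = f b * t) (x₀ x₁ : R) :
    E.δ (f x₀ + f x₁ * t) = f (D.δ x₀) +
      f ((a ^ (p - 1) + (p : R) * b) * D.δ x₁ + b * x₁ ^ p -
        ∑ ν ∈ Finset.Ioo 0 p,
          ((p.choose ν / p : ℕ) : R) * x₀ ^ (p - ν) * a ^ (ν - 1) * x₁ ^ ν) * t := by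
  have htp : t ^ p = f a ^ (p - 1) * t := by
    rw [← pow_succ_eq_of_sq_eq_mul ht, Nat.sub_one_add_one hp]
  calc E.δ (f x₀ + f x₁ * t)
    _ = E.δ (f x₁ * t) + E.δ (f x₀) - wittCarry p (f x₁ * t) (f x₀) := by
        rw [add_comm, E.delta_add, wittCarry]
    _ = _ := by
        rw [wittCarry_mul_left_of_sq_eq_mul ht, E.delta_mul, hf, hf, hδt, htp]
        simp only [map_sub, map_add, map_mul, map_pow, map_natCast, map_sum]
        ring

variable [Fact p.Prime]

/-- The lift `a ↦ (f a, f (δ a))` of a ring homomorphism `f : R → S` to Witt vectors of length two,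
for a δ-structure on `R`. -/
def wittLift (D : DeltaStructure p R) (f : R →+* S) : R →+* WittTwo p S where
  toFun a := TruncatedWittVector.mk p ![f a, f (D.δ a)]
  map_zero' := by
    apply WittTwo.ext <;> simp [D.delta_zero]
  map_one' := by
    apply WittTwo.ext <;> simp [D.delta_one, WittTwo.coeff_zero_one, WittTwo.coeff_one_one]
  map_add' x y := by
    apply WittTwo.ext
    · simp [WittTwo.coeff_zero_add]
    · simp [WittTwo.coeff_one_add, D.delta_add, wittCarry]
  map_mul' x y := by
    apply WittTwo.ext
    · simp [WittTwo.coeff_zero_mul]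
    · simp [WittTwo.coeff_one_mul, D.delta_mul]

/-- The δ-structure whose operator is the coefficient `1` of a section of `W₂(R) → R`. -/
noncomputable def ofSection (s : R →+* WittTwo p R)
    (hs : (WittTwo.projection p R).comp s = RingHom.id R) : DeltaStructure p R :=
  have coeff_zero (x : R) : (s x).coeff 0 = x := RingHom.congr_fun hs x
  { δ := fun x => (s x).coeff 1
    delta_zero := by rw [map_zero, TruncatedWittVector.coeff_zero]
    delta_one := by rw [map_one, WittTwo.coeff_one_one]
    delta_add := fun x y => by
      rw [map_add, WittTwo.coeff_one_add, coeff_zero, coeff_zero, wittCarry]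
    delta_mul := fun x y => by
      rw [map_mul, WittTwo.coeff_one_mul, coeff_zero, coeff_zero] }

theorem eq_of_polynomial_surjective {B : Type*} [Semiring B] {f : B[X] →+* S}
    (hf : Function.Surjective f) {D E : DeltaStructure p S}
    (hC : ∀ a, D.δ (f (C a)) = E.δ (f (C a)))
    (hX : D.δ (f X) = E.δ (f X)) : D = E := by
  have hlift : (D.wittLift (RingHom.id S)).comp f = (E.wittLift (RingHom.id S)).comp f := by
    apply Polynomial.ringHom_ext
    · intro a
      simp [wittLift, hC]
    · simp [wittLift, hX]
  apply δ_injective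
  funext z
  obtain ⟨g, rfl⟩ := hf z
  exact congrArg (TruncatedWittVector.coeff 1) (RingHom.congr_fun hlift g)

theorem exists_polynomial_quotient_extension (D : DeltaStructure p R) {I : Ideal R[X]}
    (b : R[X] ⧸ I)
    (hI : I ≤ RingHom.ker (eval₂RingHom (D.wittLift ((Ideal.Quotient.mk I).comp C))
      (TruncatedWittVector.mk p ![Ideal.Quotient.mk I X, b]))) :
    ∃ E : DeltaStructure p (R[X] ⧸ I),
      (∀ a, E.δ (Ideal.Quotient.mk I (C a)) = Ideal.Quotient.mk I (C (D.δ a))) ∧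
        E.δ (Ideal.Quotient.mk I X) = b := by
  let s : R[X] ⧸ I →+* WittTwo p (R[X] ⧸ I) := Ideal.Quotient.lift I _ hI
  have s_C (a : R) : s (Ideal.Quotient.mk I (C a)) =
      TruncatedWittVector.mk p ![Ideal.Quotient.mk I (C a), Ideal.Quotient.mk I (C (D.δ a))] := by
    simp [s, wittLift]
  have s_X : s (Ideal.Quotient.mk I X) =
      TruncatedWittVector.mk p ![Ideal.Quotient.mk I X, b] :=
    (Ideal.Quotient.lift_mk ..).trans (eval₂_X ..)
  have hs : (WittTwo.projection p (R[X] ⧸ I)).comp s = RingHom.id (R[X] ⧸ I) := by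
    apply Ideal.Quotient.ringHom_ext
    apply Polynomial.ringHom_ext
    · intro a
      simp [s_C, WittTwo.projection]
    · simp [s_X, WittTwo.projection]
  exact ⟨ofSection s hs, fun a => by simp [ofSection, s_C], by simp [ofSection, s_X]⟩

end DeltaStructure

section TwistedExtension

variable {A : Type*} [CommRing A]

theorem twExt_X_sq (α : A) :
    Ideal.Quotient.mk (twIdeal α) X ^ 2 =
      Ideal.Quotient.mk (twIdeal α) (C α) * Ideal.Quotient.mk (twIdeal α) X := by
  rw [← map_pow, ← map_mul, Ideal.Quotient.eq]
  exact Ideal.mem_span_singleton_self _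

theorem twIdeal_le_ker_wittLift {p : ℕ} [Fact p.Prime] (D : DeltaStructure p A) {α β : A}
    (hαβ : D.δ α = α * β) :
    twIdeal α ≤ RingHom.ker (eval₂RingHom (D.wittLift ((Ideal.Quotient.mk (twIdeal α)).comp C))
      (TruncatedWittVector.mk p
        ![Ideal.Quotient.mk (twIdeal α) X, Ideal.Quotient.mk (twIdeal α) (C β * X)])) := by
  refine (Ideal.span_singleton_le_iff_mem _).2 ?_
  rw [RingHom.mem_ker, map_sub, sub_eq_zero]
  simpa [DeltaStructure.wittLift, hαβ] using
    WittTwo.mk_sq_eq_mul_of_sq_eq_mul (twExt_X_sq α) (Ideal.Quotient.mk (twIdeal α) (C β))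

end TwistedExtension

/-- If `δ(α) = α·β` in a δ-ring `A`, there is a unique δ-structure on
`E^α(A) = A[T]/(T² − α·T)` such that `ι : A → E^α(A)` is a δ-homomorphism and
`δ(T) = β·T`; it is given explicitly by
`δ(x₀ + x₁T) = δ(x₀) + ((α^{p−1} + pβ)·δ(x₁) + β·x₁^p − ∑_{ν=1}^{p−1}
(1/p)·C(p,ν)·x₀^{p−ν}·α^{ν−1}·x₁^ν)·T`. -/
theorem delta_structure_twisted_extension (p : ℕ) (hp : p.Prime)
    (A : Type*) [CommRing A] (DA : DeltaStructure p A)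
    (α β : A) (hαβ : DA.δ α = α * β) :
    ∃ DE : DeltaStructure p (TwExt α),
      ((∀ a : A, DE.δ (Ideal.Quotient.mk (twIdeal α) (C a)) =
          Ideal.Quotient.mk (twIdeal α) (C (DA.δ a))) ∧
        DE.δ (Ideal.Quotient.mk (twIdeal α) X) =
          Ideal.Quotient.mk (twIdeal α) (C β * X)) ∧
      (∀ x₀ x₁ : A,
        DE.δ (Ideal.Quotient.mk (twIdeal α) (C x₀ + C x₁ * X)) =
          Ideal.Quotient.mk (twIdeal α) (C (DA.δ x₀) +
            C ((α ^ (p - 1) + (p : A) * β) * DA.δ x₁ + β * x₁ ^ p -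
              ∑ ν ∈ Finset.Ioo 0 p,
                ((p.choose ν / p : ℕ) : A) * x₀ ^ (p - ν) * α ^ (ν - 1) * x₁ ^ ν) * X)) ∧
      (∀ DE' : DeltaStructure p (TwExt α),
        ((∀ a : A, DE'.δ (Ideal.Quotient.mk (twIdeal α) (C a)) =
            Ideal.Quotient.mk (twIdeal α) (C (DA.δ a))) ∧
          DE'.δ (Ideal.Quotient.mk (twIdeal α) X) =
            Ideal.Quotient.mk (twIdeal α) (C β * X)) → DE' = DE) := by
  have : Fact p.Prime := ⟨hp⟩
  obtain ⟨DE, hC, hX⟩ := DA.exists_polynomial_quotient_extension _ (twIdeal_le_ker_wittLift DA hαβ)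
  refine ⟨DE, ⟨hC, hX⟩, fun x₀ x₁ => ?_, fun DE' ⟨hC', hX'⟩ => ?_⟩
  · rw [map_mul] at hX
    simpa only [map_add, map_mul, RingHom.comp_apply] using
      DA.δ_map_add_map_mul_of_sq_eq_mul hp.ne_zero DE ((Ideal.Quotient.mk (twIdeal α)).comp C) hC
        (twExt_X_sq α) hX x₀ x₁
  · exact DeltaStructure.eq_of_polynomial_surjective Ideal.Quotient.mk_surjective
      (fun a => (hC' a).trans (hC a).symm) (hX'.trans hX.symm)
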